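/- Let G be a hyperbolic group and let h ∈ G be an element of infinite order. Then the set of roots of h, i.e. {x ∈ G | ∃ n ≥ 1, x^n = h}, is finite, and its cardinality is at most the index of the cyclic subgroup ⟨h⟩ in the centralizer Z_G(h) (which is finite). -/

import Mathlib

/-- The word metric on a group `G` with respect to a generating set `S`:
`wordDist S g h` is the least length of a word in `S ∪ S⁻¹` representing `g⁻¹ * h`. -/
noncomputable def wordDist {G : Type*} [Group G] (S : Set G) (g h : G) : ℝ :=
  sInf {r : ℝ | ∃ l : List G, (∀ x ∈ l, x ∈ S ∨ x⁻¹ ∈ S) ∧ l.prod = g⁻¹ * h ∧ r = l.length}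

/-- The Gromov product `(x|y)_w` with respect to the word metric for `S`. -/
noncomputable def gromovProd {G : Type*} [Group G] (S : Set G) (w x y : G) : ℝ :=
  (wordDist S x w + wordDist S y w - wordDist S x y) / 2

/-- A group is (Gromov) hyperbolic if it admits a finite generating set `S` such that
the word metric `d_S` satisfies the Gromov product four-point condition for some `δ ≥ 0`. -/
def IsHyperbolicGroup (G : Type*) [Group G] : Prop :=
  ∃ S : Set G, S.Finite ∧ Subgroup.closure S = ⊤ ∧
    ∃ δ : ℝ, 0 ≤ δ ∧ ∀ w x y z : G,
      gromovProd S w x y ≥ min (gromovProd S w x z) (gromovProd S w y z) - δ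

def IsWord {G : Type*} [Group G] (S : Set G) (l : List G) : Prop :=
  ∀ x ∈ l, x ∈ S ∨ x⁻¹ ∈ S

noncomputable def wl {G : Type*} [Group G] (S : Set G) (g : G) : ℕ :=
  sInf {n : ℕ | ∃ l : List G, IsWord S l ∧ l.prod = g ∧ n = l.length}

theorem exists_word {G : Type*} [Group G] {S : Set G} (hS : Subgroup.closure S = ⊤) (g : G) :
    ∃ l : List G, IsWord S l ∧ l.prod = g := by
  have hg : g ∈ Subgroup.closure S := by rw [hS]; trivial
  rw [← Subgroup.mem_toSubmonoid, Subgroup.closure_toSubmonoid] at hg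
  obtain ⟨l, hl, h⟩ := Submonoid.exists_list_of_mem_closure hg
  exact ⟨l, hl, h⟩

theorem wl_spec {G : Type*} [Group G] {S : Set G} (hS : Subgroup.closure S = ⊤) (g : G) :
    ∃ l : List G, IsWord S l ∧ l.prod = g ∧ wl S g = l.length := by
  have : {n : ℕ | ∃ l : List G, IsWord S l ∧ l.prod = g ∧ n = l.length}.Nonempty := by
    obtain ⟨l, hl, h⟩ := exists_word hS g
    exact ⟨l.length, l, hl, h, rfl⟩
  exact Nat.sInf_mem this

theorem wl_le {G : Type*} [Group G] {S : Set G} {l : List G} (hl : IsWord S l) :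
    wl S l.prod ≤ l.length := Nat.sInf_le ⟨l, hl, rfl, rfl⟩

theorem wl_inv_le {G : Type*} [Group G] {S : Set G} (hS : Subgroup.closure S = ⊤) (g : G) :
    wl S g⁻¹ ≤ wl S g := by
  obtain ⟨l, hl, h, hn⟩ := wl_spec hS g
  have := wl_le (S := S) (l := (l.map (·⁻¹)).reverse) (by
    intro x hx
    simp only [List.mem_reverse, List.mem_map] at hx
    obtain ⟨y, hy, rfl⟩ := hx
    rcases hl y hy with h | h
    · right; simpa using h
    · left; exact h)
  rw [← List.prod_inv_reverse, h] at this
  simpa [hn] using this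

theorem wl_inv {G : Type*} [Group G] {S : Set G} (hS : Subgroup.closure S = ⊤) (g : G) :
    wl S g⁻¹ = wl S g :=
  le_antisymm (wl_inv_le hS g) (by simpa using wl_inv_le hS g⁻¹)

theorem wordDist_eq {G : Type*} [Group G] {S : Set G} (hS : Subgroup.closure S = ⊤) (g h : G) :
    wordDist S g h = wl S (g⁻¹ * h) := by
  apply IsLeast.csInf_eq
  constructor
  · obtain ⟨l, hl, h1, hn⟩ := wl_spec hS (g⁻¹ * h)
    exact ⟨l, hl, h1, by rw [hn]⟩
  · rintro r ⟨l, hl, h1, rfl⟩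
    rw [← h1]
    exact_mod_cast wl_le hl

theorem ball_finite {G : Type*} [Group G] {S : Set G} (hf : S.Finite)
    (hS : Subgroup.closure S = ⊤) (n : ℕ) : {g : G | wl S g ≤ n}.Finite := by
  have hT : {x : G | x ∈ S ∨ x⁻¹ ∈ S}.Finite := by
    have : {x : G | x ∈ S ∨ x⁻¹ ∈ S} = S ∪ (·⁻¹) ⁻¹' S := rfl
    rw [this]
    exact hf.union (hf.preimage inv_injective.injOn)
  have : Finite {x : G | x ∈ S ∨ x⁻¹ ∈ S} := hT
  refine ((List.finite_length_le {x : G | x ∈ S ∨ x⁻¹ ∈ S} n).image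
    (fun l => (l.map Subtype.val).prod)).subset ?_
  intro g hg
  obtain ⟨l, hl, h1, hn⟩ := wl_spec hS g
  have hg' : wl S g ≤ n := hg
  obtain ⟨l', rfl⟩ : ∃ l' : List {x : G | x ∈ S ∨ x⁻¹ ∈ S}, l'.map Subtype.val = l := by
    clear h1 hn
    induction l with
    | nil => exact ⟨[], rfl⟩
    | cons x t ih =>
      obtain ⟨l', hl'⟩ := ih (fun y hy => hl y (List.mem_cons_of_mem _ hy))
      exact ⟨⟨x, hl x List.mem_cons_self⟩ :: l', by rw [List.map_cons, hl']⟩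
  refine ⟨l', ?_, h1⟩
  change l'.length ≤ n
  rw [List.length_map] at hn
  omega

theorem four_pt {G : Type*} [Group G] {S : Set G} {δ : ℝ}
    (hδ : ∀ w x y z : G,
      gromovProd S w x y ≥ min (gromovProd S w x z) (gromovProd S w y z) - δ)
    (p q r s : G) (K : ℝ) (h1 : wordDist S p r + wordDist S q s ≤ K)
    (h2 : wordDist S p s + wordDist S q r ≤ K) :
    wordDist S p q + wordDist S r s ≤ K + 2 * δ := by
  have := hδ s p q r
  unfold gromovProd at this
  rcases min_choice ((wordDist S p s + wordDist S r s - wordDist S p r) / 2)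
    ((wordDist S q s + wordDist S r s - wordDist S q r) / 2) with h | h <;>
  rw [h] at this <;> linarith

theorem key {G : Type*} [Group G] {S : Set G} (hf : S.Finite)
    (hS : Subgroup.closure S = ⊤) {δ : ℝ} (h0 : 0 ≤ δ)
    (hδ : ∀ w x y z : G,
      gromovProd S w x y ≥ min (gromovProd S w x z) (gromovProd S w y z) - δ)
    (h : G) (hinj : Function.Injective (fun n : ℕ => h ^ n)) :
    ∃ M : ℕ, ∀ c : G, c * h = h * c → (∀ n : ℤ, wl S c ≤ wl S (c * h ^ n)) → wl S c ≤ M := by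
  have hsymm : ∀ x y : G, wordDist S x y = wordDist S y x := by
    intro x y
    rw [wordDist_eq hS, wordDist_eq hS, ← wl_inv hS]; simp
  have hleft : ∀ g x y : G, wordDist S (g * x) (g * y) = wordDist S x y := by
    intro g x y
    rw [wordDist_eq hS, wordDist_eq hS]; congr 2; group
  have hB := ball_finite hf hS ⌊6 * δ⌋₊
  set B := hB.toFinset with hBdef
  set N := B.card
  refine ⟨∑ k ∈ Finset.range (N + 1), wl S (h ^ k), ?_⟩
  intro c hc hmin
  by_contra! hlt
  obtain ⟨l, hl, hlc, hlen⟩ := wl_spec hS c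
  set L := wl S c with hL
  set a := L / 2 with ha
  set m := (l.take a).prod with hm
  have hm1 : wordDist S m 1 ≤ a := by
    rw [hsymm, wordDist_eq hS]
    have := wl_le (S := S) (l := l.take a) (fun x hx => hl x (List.mem_of_mem_take hx))
    have h2 : (l.take a).length ≤ a := by simp
    simp only [inv_one, one_mul]
    exact_mod_cast this.trans h2
  have hm2 : wordDist S m c ≤ L - a := by
    rw [wordDist_eq hS]
    have := wl_le (S := S) (l := l.drop a) (fun x hx => hl x (List.mem_of_mem_drop hx))
    have e : m⁻¹ * c = (l.drop a).prod := by
      rw [inv_mul_eq_iff_eq_mul, hm, ← List.prod_append, List.take_append_drop, hlc]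
    rw [e]
    have h2 : (l.drop a).length = L - a := by simp [hlen]
    have h3 : wl S (l.drop a).prod + a ≤ L := by omega
    have : ((wl S (l.drop a).prod : ℝ)) + a ≤ L := by exact_mod_cast h3
    linarith
  have hcomm : ∀ k : ℕ, c * h ^ k = h ^ k * c := fun k => (Commute.pow_right hc k : _)
  have claim : ∀ k ∈ Finset.range (N + 1), m⁻¹ * (h ^ k * m) ∈ B := by
    intro k hk
    have hk1 : wl S (h ^ k) < L :=
      lt_of_le_of_lt (Finset.single_le_sum (f := fun k => wl S (h ^ k))
        (fun _ _ => Nat.zero_le _) hk) hlt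
    set g := h ^ k with hg
    have hgc : c * g = g * c := hcomm k
    -- distances
    have d1 : wordDist S 1 g = wl S g := by rw [wordDist_eq hS]; simp
    have d2 : wordDist S c (g * c) = wl S g := by
      rw [wordDist_eq hS, ← hgc]; simp
    have d3 : wordDist S 1 c = L := by rw [wordDist_eq hS]; simp [hL]
    have d4 : wordDist S g (g * c) = L := by
      rw [← d3, ← hleft g 1 c, mul_one]
    have d5 : (L : ℝ) ≤ wordDist S 1 (g * c) := by
      rw [wordDist_eq hS, ← hgc]
      have := hmin k
      simp only [inv_one, one_mul]
      rw [zpow_natCast] at this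
      exact_mod_cast this
    have d6 : (L : ℝ) ≤ wordDist S g c := by
      rw [wordDist_eq hS]
      have := hmin (-k)
      rw [zpow_neg, zpow_natCast, ← hg] at this
      have e : g⁻¹ * c = c * g⁻¹ := by
        rw [inv_mul_eq_iff_eq_mul, ← mul_assoc, ← hgc]; group
      rw [e]
      exact_mod_cast this
    have m1 : wordDist S (g * m) g ≤ a := by
      have := hleft g m 1
      rw [mul_one] at this; rw [this]; exact hm1
    have m2 : wordDist S (g * m) (g * c) ≤ L - a := by rw [hleft]; exact hm2
    have n1 : (wl S g : ℝ) ≤ 2 * a := by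
      have : wl S g ≤ 2 * a := by omega
      exact_mod_cast this
    have n2 : 2 * (a : ℝ) ≤ L := by
      have : 2 * a ≤ L := by omega
      exact_mod_cast this
    have n3 : (wl S g : ℝ) ≤ L := by exact_mod_cast hk1.le
    have s1 := hsymm g c
    have s2 := hsymm 1 c
    have s3 := hsymm (g * c) c
    have s4 := hsymm g 1
    have s5 := hsymm (g * c) 1
    have f1 := four_pt hδ 1 (g * c) c g (2 * L) (by linarith [hsymm (g * c) g])
      (by linarith)
    have f2 := four_pt hδ m g 1 c (a + L + 2 * δ) (by linarith) (by linarith)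
    have f3 := four_pt hδ m (g * c) 1 c (2 * L - a + 2 * δ) (by linarith) (by linarith)
    have f4 := four_pt hδ m (g * m) g (g * c) (L + 4 * δ) (by linarith) (by linarith)
    have f5 : wordDist S m (g * m) ≤ 6 * δ := by linarith
    rw [wordDist_eq hS] at f5
    rw [hBdef, Set.Finite.mem_toFinset]
    exact Nat.le_floor f5
  have := Finset.card_le_card_of_injOn (s := Finset.range (N + 1)) (t := B)
    (fun k => m⁻¹ * (h ^ k * m)) claim (by
      intro i _ j _ hij
      apply hinj
      simpa using hij)
  rw [Finset.card_range] at this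
  omega

theorem stmt_6 {G : Type*} [Group G] (hG : IsHyperbolicGroup G)
    (h : G) (hord : ∀ n : ℤ, n ≠ 0 → h ^ n ≠ 1) :
    {x : G | ∃ n : ℕ, 1 ≤ n ∧ x ^ n = h}.Finite ∧
    ((Subgroup.zpowers h).subgroupOf (Subgroup.centralizer {h})).FiniteIndex ∧
    Nat.card {x : G | ∃ n : ℕ, 1 ≤ n ∧ x ^ n = h} ≤
      ((Subgroup.zpowers h).subgroupOf (Subgroup.centralizer {h})).index := by
  obtain ⟨S, hf, hS, δ, h0, hδ⟩ := hG
  have hz : ∀ i : ℤ, h ^ i = 1 → i = 0 := fun i hi => by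
    by_contra hne; exact hord i hne hi
  have hinj : Function.Injective (fun n : ℕ => h ^ n) := by
    intro i j hij
    have hij' : h ^ i = h ^ j := hij
    have := hz ((i : ℤ) - j) (by rw [zpow_sub, zpow_natCast, zpow_natCast, hij']; simp)
    omega
  obtain ⟨M, hM⟩ := key hf hS h0 hδ h hinj
  set Z := Subgroup.centralizer {h} with hZ
  set H := (Subgroup.zpowers h).subgroupOf Z with hH
  have hmemZ : ∀ x : G, x ∈ Z ↔ x * h = h * x := by
    intro x
    rw [hZ, Subgroup.mem_centralizer_singleton_iff]
  have hhZ : ∀ n : ℤ, h ^ n ∈ Z := fun n => by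
    rw [hmemZ]; exact ((Commute.refl h).zpow_left n : _)
  have hball := ball_finite hf hS M
  have hfin : Finite (Z ⧸ H) := by
    have hb : {z : Z | wl S (z : G) ≤ M}.Finite :=
      hball.preimage (f := (Subtype.val : Z → G)) Subtype.val_injective.injOn
    have : (Set.univ : Set (Z ⧸ H)).Finite := by
      refine (hb.image (QuotientGroup.mk (s := H))).subset ?_
      intro q _
      obtain ⟨c, rfl⟩ := QuotientGroup.mk_surjective q
      obtain ⟨n0, hn0⟩ : ∃ n0 : ℤ, ∀ n : ℤ,
          wl S ((c : G) * h ^ n0) ≤ wl S ((c : G) * h ^ n) := by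
        exact ⟨Function.argmin (fun n : ℤ => wl S ((c : G) * h ^ n)),
          fun n => Function.argmin_le (fun n : ℤ => wl S ((c : G) * h ^ n)) n⟩
      refine ⟨c * ⟨h ^ n0, hhZ n0⟩, ?_, ?_⟩
      · change wl S ((c : G) * h ^ n0) ≤ M
        apply hM
        · exact (hmemZ _).1 (Z.mul_mem c.2 (hhZ n0))
        · intro n
          rw [mul_assoc, ← zpow_add]
          exact hn0 _
      · rw [eq_comm, QuotientGroup.eq, hH, Subgroup.mem_subgroupOf]
        simp
    exact Set.finite_univ_iff.1 this
  have hroot : ∀ x : G, (∃ n : ℕ, 1 ≤ n ∧ x ^ n = h) → x ∈ Z := by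
    rintro x ⟨n, _, hx⟩
    rw [hmemZ, ← hx]; exact ((Commute.refl x).pow_right n : _)
  let f : {x : G | ∃ n : ℕ, 1 ≤ n ∧ x ^ n = h} → Z ⧸ H :=
    fun x => QuotientGroup.mk ⟨x.1, hroot x.1 x.2⟩
  have hfinj : Function.Injective f := by
    rintro ⟨x, hx⟩ ⟨y, hy⟩ hxy
    have hxy' := QuotientGroup.eq.1 hxy
    rw [hH, Subgroup.mem_subgroupOf] at hxy'
    obtain ⟨k, hk⟩ := Subgroup.mem_zpowers_iff.1 hxy'
    simp only [Subgroup.coe_mul, Subgroup.coe_inv] at hk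
    obtain ⟨n, hn, hxn⟩ := hx
    obtain ⟨m, hm, hym⟩ := hy
    have hy' : y = x ^ (1 + n * k : ℤ) := by
      rw [zpow_add, zpow_one, zpow_mul, zpow_natCast, hxn, hk]; group
    have e1 : x ^ ((1 + n * k) * m - n : ℤ) = 1 := by
      rw [zpow_sub, zpow_mul, ← hy', zpow_natCast, zpow_natCast, hym, hxn]; simp
    have e2 : ((1 + n * k) * m - n : ℤ) = 0 := by
      apply hz
      rw [← hxn, ← zpow_natCast, ← zpow_mul, mul_comm, zpow_mul, e1, one_zpow]
    have hkz : k = 0 := by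
      have hm' : (1 : ℤ) ≤ m := by exact_mod_cast hm
      have hn' : (1 : ℤ) ≤ n := by exact_mod_cast hn
      rcases lt_trichotomy k 0 with hk0 | hk0 | hk0
      · nlinarith [mul_le_mul_of_nonneg_left (show k ≤ -1 by omega) (show (0:ℤ) ≤ n by omega)]
      · exact hk0
      · nlinarith [mul_le_mul_of_nonneg_left (show 1 ≤ k by omega) (show (0:ℤ) ≤ n by omega)]
    apply Subtype.ext
    simp [hy', hkz]
  refine ⟨?_, ?_, ?_⟩
  · exact Set.finite_coe_iff.1 (Finite.of_injective f hfinj)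
  · exact Subgroup.finiteIndex_of_finite_quotient
  · exact Nat.card_le_card_of_injective f hfinj
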